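/- Let n > 3 be an integer, ε₁, ε₂ > 0, and fix observed values ȳ* ∈ ℝ and s²* ∈ ℝ. Define the marginal likelihood L(μ, σ²) = [∫_ℝ (ε₁n/2)e^{−ε₁n|ȳ* − ȳ|} · (n/(2πσ²))^{1/2} e^{−n(ȳ − μ)²/(2σ²)} dȳ] · [∫_0^∞ (ε₂n/2)e^{−ε₂n|s²* − s|} · (((n−1)/(2σ²))^{(n−1)/2}/Γ((n−1)/2)) s^{(n−1)/2 − 1} e^{−(n−1)s/(2σ²)} ds] for μ ∈ ℝ, σ² > 0. Then ∫_0^∞ ∫_ℝ L(μ, σ²) dμ dσ² = ((n−1)/(n−3))·(1/2 + (1/2)·sgn(s²*)·(1 − e^{−ε₂n|s²*|})), which is finite. In particular, the posterior distribution under the improper prior p(μ, σ²) ∝ 1 is a proper probability distribution. -/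

import Mathlib

open MeasureTheory

/-!
Tonelli's theorem lets us integrate over the parameters before integrating over the unperturbed
statistics `ȳ` and `s`. Over `μ ∈ ℝ`, the Normal density of `ȳ` has total mass `1`, by the symmetry
`μ ↔ ȳ`; over `σ² ∈ (0, ∞)`, the Gamma density of `s` with shape `a = (n - 1) / 2` and rate `a / σ²`
has total mass `a / (a - 1)`, whatever `s` is, because it is an inverse-Gamma kernel in `σ²`.
The observed values therefore enter only through the mass that the two noise densities put on `ℝ`
and on `(0, ∞)`. Finiteness of the total integral also makes the inner Bochner integrals converge
for almost every parameter.
-/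

open ProbabilityTheory Real Set
open scoped ENNReal NNReal

section Tonelli

variable {α β : Type*} [MeasurableSpace α] [MeasurableSpace β] {μ : Measure α} {ν : Measure β}
  [SFinite μ]

lemma lintegral_ofReal_integral_of_lintegral_lintegral_ne_top {F : β → α → ℝ}
    (hF : AEStronglyMeasurable (Function.uncurry F) (ν.prod μ)) (hF₀ : ∀ᵐ θ ∂ν, 0 ≤ᵐ[μ] F θ)
    (hfin : ∫⁻ θ, ∫⁻ y, ENNReal.ofReal (F θ y) ∂μ ∂ν ≠ ∞) :
    ∫⁻ θ, ENNReal.ofReal (∫ y, F θ y ∂μ) ∂ν = ∫⁻ θ, ∫⁻ y, ENNReal.ofReal (F θ y) ∂μ ∂ν := by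
  have hfin_ae : ∀ᵐ θ ∂ν, ∫⁻ y, ENNReal.ofReal (F θ y) ∂μ < ∞ :=
    ae_lt_top' hF.aemeasurable.ennreal_ofReal.lintegral_prod_right' hfin
  refine lintegral_congr_ae ?_
  filter_upwards [hfin_ae, hF₀, hF.prodMk_left] with θ hθ hθ₀ hθm
  rw [integral_eq_lintegral_of_nonneg_ae hθ₀ hθm, ENNReal.ofReal_toReal hθ.ne]

lemma lintegral_ofReal_integral_mul_of_lintegral_eq [SFinite ν] {f : α → ℝ} {k : β → α → ℝ}
    {C : ℝ≥0∞} (hf : Integrable f μ) (hf₀ : 0 ≤ᵐ[μ] f) (hk : Measurable (Function.uncurry k))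
    (hk₀ : ∀ᵐ θ ∂ν, 0 ≤ᵐ[μ] k θ) (hC : C ≠ ∞)
    (hkC : ∀ᵐ y ∂μ, ∫⁻ θ, ENNReal.ofReal (k θ y) ∂ν = C) :
    ∫⁻ θ, ENNReal.ofReal (∫ y, f y * k θ y ∂μ) ∂ν = C * ENNReal.ofReal (∫ y, f y ∂μ) := by
  have hfk : AEStronglyMeasurable (Function.uncurry fun θ y ↦ f y * k θ y) (ν.prod μ) :=
    hf.aestronglyMeasurable.comp_snd.mul hk.aestronglyMeasurable
  have htotal : ∫⁻ θ, ∫⁻ y, ENNReal.ofReal (f y * k θ y) ∂μ ∂ν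
      = C * ENNReal.ofReal (∫ y, f y ∂μ) := by
    rw [lintegral_lintegral_swap hfk.aemeasurable.ennreal_ofReal,
      ofReal_integral_eq_lintegral_ofReal hf hf₀, ← lintegral_const_mul' _ _ hC]
    refine lintegral_congr_ae ?_
    filter_upwards [hf₀, hkC] with y hy hkCy
    simp_rw [ENNReal.ofReal_mul hy]
    rw [lintegral_const_mul' _ _ ENNReal.ofReal_ne_top, hkCy, mul_comm]
  rw [← htotal]
  refine lintegral_ofReal_integral_of_lintegral_lintegral_ne_top hfk ?_
    (htotal ▸ ENNReal.mul_ne_top hC ENNReal.ofReal_ne_top)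
  filter_upwards [hk₀] with θ hθ
  filter_upwards [hf₀, hθ] with y hfy hky using mul_nonneg hfy hky

end Tonelli

section Normal

lemma gaussianPDFReal_swap (m : ℝ) (v : ℝ≥0) (x : ℝ) :
    gaussianPDFReal m v x = gaussianPDFReal x v m := by
  simp only [gaussianPDFReal, sub_sq_comm x m]

lemma sqrt_mul_exp_eq_gaussianPDFReal {κ σ2 : ℝ} (hκ : 0 < κ) (hσ2 : 0 < σ2) (m x : ℝ) :
    √(κ / (2 * π * σ2)) * exp (-(κ * (x - m) ^ 2) / (2 * σ2))
      = gaussianPDFReal m (σ2 / κ).toNNReal x := by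
  have hnorm : κ / (2 * π * σ2) = (2 * π * (σ2 / κ))⁻¹ := by field_simp
  have hexp : -(κ * (x - m) ^ 2) / (2 * σ2) = -(x - m) ^ 2 / (2 * (σ2 / κ)) := by field_simp
  rw [gaussianPDFReal, coe_toNNReal _ (by positivity), hnorm, sqrt_inv, hexp]

lemma lintegral_ofReal_integral_mul_gaussianPDFReal {f : ℝ → ℝ} (hf : Integrable f)
    (hf₀ : 0 ≤ᵐ[volume] f) {v : ℝ≥0} (hv : v ≠ 0) :
    ∫⁻ m, ENNReal.ofReal (∫ y, f y * gaussianPDFReal m v y) = ENNReal.ofReal (∫ y, f y) := by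
  have hmass (y : ℝ) : ∫⁻ m, ENNReal.ofReal (gaussianPDFReal m v y) = 1 := by
    simp_rw [gaussianPDFReal_swap _ v y]
    exact lintegral_gaussianPDFReal_eq_one y hv
  rw [lintegral_ofReal_integral_mul_of_lintegral_eq hf hf₀ (by unfold Function.uncurry; fun_prop)
    (ae_of_all _ fun m ↦ ae_of_all _ (gaussianPDFReal_nonneg m v)) ENNReal.one_ne_top
    (ae_of_all _ hmass), one_mul]

end Normal

section Gamma

lemma integral_rpow_mul_exp_neg_div_Ioi {a r : ℝ} (ha : 0 < a) (hr : 0 < r) :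
    ∫ x in Ioi 0, x ^ (-a - 1) * exp (-(r / x)) = (1 / r) ^ a * Gamma a := by
  rw [← integral_rpow_mul_exp_neg_mul_Ioi ha hr,
    ← integral_comp_rpow_Ioi (fun t ↦ t ^ (a - 1) * exp (-(r * t))) (neg_ne_zero.mpr one_ne_zero)]
  refine setIntegral_congr_fun measurableSet_Ioi fun x (hx : 0 < x) ↦ ?_
  have hpow : x ^ (-a - 1) = x ^ (-1 - 1 : ℝ) * (x ^ (-1 : ℝ)) ^ (a - 1) := by
    rw [← rpow_mul hx.le, ← rpow_add hx]
    ring_nf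
  simp only [smul_eq_mul, abs_neg, abs_one, one_mul]
  rw [hpow, rpow_neg_one, div_eq_mul_inv, mul_assoc]

lemma measurable_uncurry_gammaPDFReal (a : ℝ) : Measurable (Function.uncurry (gammaPDFReal a)) :=
  Measurable.ite (measurableSet_le measurable_const measurable_snd) (by fun_prop) measurable_const

lemma gammaPDFReal_div_eq {a b s x : ℝ} (hb : 0 ≤ b) (hs : 0 ≤ s) (hx : 0 < x) :
    gammaPDFReal a (b / x) s
      = b ^ a * s ^ (a - 1) / Gamma a * (x ^ (-(a - 1) - 1) * exp (-(b * s / x))) := by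
  have hpow : x ^ (-(a - 1) - 1) = (x ^ a)⁻¹ := by
    rw [← rpow_neg hx.le]
    ring_nf
  rw [gammaPDFReal, if_pos hs, div_rpow hb hx.le, hpow, div_mul_eq_mul_div b x s]
  ring

lemma integral_gammaPDFReal_div_Ioi {a b s : ℝ} (ha : 1 < a) (hb : 0 < b) (hs : 0 < s) :
    ∫ x in Ioi 0, gammaPDFReal a (b / x) s = b / (a - 1) := by
  have ha' : 0 < a - 1 := sub_pos.mpr ha
  have hΓ : Gamma a = (a - 1) * Gamma (a - 1) := by
    simpa only [sub_add_cancel] using Gamma_add_one ha'.ne'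
  have hb_pow : b ^ a = b ^ (a - 1) * b := by
    rw [← rpow_add_one hb.ne', sub_add_cancel]
  rw [setIntegral_congr_fun measurableSet_Ioi fun x hx ↦ gammaPDFReal_div_eq hb.le hs.le hx,
    integral_const_mul, integral_rpow_mul_exp_neg_div_Ioi ha' (mul_pos hb hs),
    one_div, inv_rpow (mul_pos hb hs).le, mul_rpow hb.le hs.le, hΓ, hb_pow]
  field_simp

lemma lintegral_gammaPDFReal_div_Ioi {a b s : ℝ} (ha : 1 < a) (hb : 0 < b) (hs : 0 < s) :
    ∫⁻ x in Ioi 0, ENNReal.ofReal (gammaPDFReal a (b / x) s) = ENNReal.ofReal (b / (a - 1)) := by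
  have hval := integral_gammaPDFReal_div_Ioi ha hb hs
  have hpos : 0 < b / (a - 1) := div_pos hb (sub_pos.mpr ha)
  rw [← hval, ofReal_integral_eq_lintegral_ofReal (.of_integral_ne_zero (hval ▸ hpos.ne'))]
  filter_upwards [ae_restrict_mem measurableSet_Ioi] with x (hx : 0 < x)
  exact gammaPDFReal_nonneg (one_pos.trans ha) (div_pos hb hx) s

lemma lintegral_ofReal_integral_mul_gammaPDFReal_div {g : ℝ → ℝ} (hg : IntegrableOn g (Ioi 0))
    (hg₀ : 0 ≤ᵐ[volume.restrict (Ioi 0)] g) {a b : ℝ} (ha : 1 < a) (hb : 0 < b) :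
    ∫⁻ x in Ioi 0, ENNReal.ofReal (∫ s in Ioi 0, g s * gammaPDFReal a (b / x) s)
      = ENNReal.ofReal (b / (a - 1)) * ENNReal.ofReal (∫ s in Ioi 0, g s) := by
  have hmeas : Measurable (Function.uncurry fun x ↦ gammaPDFReal a (b / x)) :=
    (measurable_uncurry_gammaPDFReal a).comp
      ((measurable_const.div measurable_fst).prodMk measurable_snd)
  refine lintegral_ofReal_integral_mul_of_lintegral_eq hg hg₀ hmeas ?_ ENNReal.ofReal_ne_top ?_
  · filter_upwards [ae_restrict_mem measurableSet_Ioi] with x (hx : 0 < x)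
    exact ae_of_all _ (gammaPDFReal_nonneg (one_pos.trans ha) (div_pos hb hx))
  · filter_upwards [ae_restrict_mem measurableSet_Ioi] with s (hs : 0 < s)
    exact lintegral_gammaPDFReal_div_Ioi ha hb hs

end Gamma

section Laplace

/-- Density at `x` of the Laplace distribution with location `m`, parametrised by its rate `c`,
the inverse of the scale; it is the noise density of a privatised statistic. -/
noncomputable def laplacePDFReal (m c x : ℝ) : ℝ := c / 2 * exp (-c * |m - x|)

variable {m c t : ℝ}

lemma laplacePDFReal_nonneg (m : ℝ) (hc : 0 ≤ c) (x : ℝ) : 0 ≤ laplacePDFReal m c x := by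
  unfold laplacePDFReal
  positivity

lemma laplacePDFReal_of_le {x : ℝ} (hx : x ≤ m) :
    laplacePDFReal m c x = c / 2 * exp (-c * m) * exp (c * x) := by
  rw [laplacePDFReal, abs_of_nonneg (sub_nonneg.mpr hx), mul_assoc, ← exp_add]
  ring_nf

lemma laplacePDFReal_of_ge {x : ℝ} (hx : m ≤ x) :
    laplacePDFReal m c x = c / 2 * exp (c * m) * exp (-c * x) := by
  rw [laplacePDFReal, abs_of_nonpos (sub_nonpos.mpr hx), mul_assoc, ← exp_add]
  ring_nf

lemma integrable_laplacePDFReal (m : ℝ) (hc : 0 < c) : Integrable (laplacePDFReal m c) := by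
  have hIic : IntegrableOn (laplacePDFReal m c) (Iic m) :=
    IntegrableOn.congr_fun ((integrableOn_exp_mul_Iic hc m).const_mul _)
      (fun _ hx ↦ (laplacePDFReal_of_le hx).symm) measurableSet_Iic
  have hIoi : IntegrableOn (laplacePDFReal m c) (Ioi m) :=
    IntegrableOn.congr_fun ((integrableOn_exp_mul_Ioi (neg_lt_zero.mpr hc) m).const_mul _)
      (fun _ hx ↦ (laplacePDFReal_of_ge (le_of_lt hx)).symm) measurableSet_Ioi
  rw [← integrableOn_univ, ← Iic_union_Ioi (a := m)]
  exact hIic.union hIoi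

lemma integral_Iic_laplacePDFReal_of_le (hc : 0 < c) (ht : t ≤ m) :
    ∫ x in Iic t, laplacePDFReal m c x = exp (-c * (m - t)) / 2 := by
  rw [setIntegral_congr_fun measurableSet_Iic fun x hx ↦ laplacePDFReal_of_le (le_trans hx ht),
    integral_const_mul, integral_exp_mul_Iic hc,
    show -c * (m - t) = -c * m + c * t by ring, exp_add]
  field_simp

lemma integral_Ioi_laplacePDFReal_of_ge (hc : 0 < c) (ht : m ≤ t) :
    ∫ x in Ioi t, laplacePDFReal m c x = exp (-c * (t - m)) / 2 := by
  rw [setIntegral_congr_fun measurableSet_Ioi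
      fun x hx ↦ laplacePDFReal_of_ge (ht.trans (le_of_lt hx)),
    integral_const_mul, integral_exp_mul_Ioi (neg_lt_zero.mpr hc),
    show -c * (t - m) = c * m + -c * t by ring, exp_add]
  field_simp

lemma integral_Iic_add_Ioi_laplacePDFReal (m : ℝ) (hc : 0 < c) (t : ℝ) :
    (∫ x in Iic t, laplacePDFReal m c x) + ∫ x in Ioi t, laplacePDFReal m c x
      = ∫ x, laplacePDFReal m c x :=
  intervalIntegral.integral_Iic_add_Ioi (integrable_laplacePDFReal m hc).integrableOn
    (integrable_laplacePDFReal m hc).integrableOn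

lemma integral_laplacePDFReal_eq_one (m : ℝ) (hc : 0 < c) : ∫ x, laplacePDFReal m c x = 1 := by
  rw [← integral_Iic_add_Ioi_laplacePDFReal m hc m, integral_Iic_laplacePDFReal_of_le hc le_rfl,
    integral_Ioi_laplacePDFReal_of_ge hc le_rfl, sub_self, mul_zero, exp_zero, add_halves]

lemma integral_Ioi_laplacePDFReal (m : ℝ) (hc : 0 < c) (t : ℝ) :
    ∫ x in Ioi t, laplacePDFReal m c x
      = 1 / 2 + 1 / 2 * sign (m - t) * (1 - exp (-c * |m - t|)) := by
  rcases lt_trichotomy m t with hmt | rfl | htm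
  · rw [integral_Ioi_laplacePDFReal_of_ge hc hmt.le, sign_of_neg (sub_neg.mpr hmt),
      abs_of_neg (sub_neg.mpr hmt), neg_sub]
    ring
  · rw [integral_Ioi_laplacePDFReal_of_ge hc le_rfl, sub_self, sign_zero, mul_zero, exp_zero]
    ring
  · have hsplit := integral_Iic_add_Ioi_laplacePDFReal m hc t
    rw [integral_Iic_laplacePDFReal_of_le hc htm.le, integral_laplacePDFReal_eq_one m hc] at hsplit
    rw [sign_of_pos (sub_pos.mpr htm), abs_of_pos (sub_pos.mpr htm)]
    linarith

end Laplace

lemma lintegral_lintegral_ofReal_integral_mul_gaussianPDFReal_mul_gammaPDFReal {f g : ℝ → ℝ}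
    (hf : Integrable f) (hf₀ : 0 ≤ᵐ[volume] f) (hg : IntegrableOn g (Ioi 0))
    (hg₀ : 0 ≤ᵐ[volume.restrict (Ioi 0)] g) {a b : ℝ} (ha : 1 < a) (hb : 0 < b) {v : ℝ → ℝ≥0}
    (hv : ∀ x, 0 < x → v x ≠ 0) :
    ∫⁻ x in Ioi 0, ∫⁻ m, ENNReal.ofReal ((∫ y, f y * gaussianPDFReal m (v x) y) *
        ∫ s in Ioi 0, g s * gammaPDFReal a (b / x) s)
      = ENNReal.ofReal (b / (a - 1) * ((∫ y, f y) * ∫ s in Ioi 0, g s)) := by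
  have hf_int : 0 ≤ ∫ y, f y := integral_nonneg_of_ae hf₀
  have hfactor_nonneg (m x : ℝ) : 0 ≤ ∫ y, f y * gaussianPDFReal m (v x) y :=
    integral_nonneg_of_ae <| hf₀.mono fun y hy ↦ mul_nonneg hy (gaussianPDFReal_nonneg _ _ _)
  have hinner (x : ℝ) (hx : x ∈ Ioi 0) :
      ∫⁻ m, ENNReal.ofReal ((∫ y, f y * gaussianPDFReal m (v x) y) *
        ∫ s in Ioi 0, g s * gammaPDFReal a (b / x) s)
      = ENNReal.ofReal (∫ y, f y) *
        ENNReal.ofReal (∫ s in Ioi 0, g s * gammaPDFReal a (b / x) s) := by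
    simp_rw [ENNReal.ofReal_mul (hfactor_nonneg _ x)]
    rw [lintegral_mul_const' _ _ ENNReal.ofReal_ne_top,
      lintegral_ofReal_integral_mul_gaussianPDFReal hf hf₀ (hv x hx)]
  rw [setLIntegral_congr_fun measurableSet_Ioi hinner,
    lintegral_const_mul' _ _ ENNReal.ofReal_ne_top,
    lintegral_ofReal_integral_mul_gammaPDFReal_div hg hg₀ ha hb,
    mul_left_comm, ← ENNReal.ofReal_mul hf_int,
    ENNReal.ofReal_mul (div_nonneg hb.le (sub_pos.mpr ha).le)]

theorem stmt_6_general {n : ℝ} (hn : 3 < n) {f g : ℝ → ℝ} (hf : Integrable f)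
    (hf₀ : 0 ≤ᵐ[volume] f) (hg : IntegrableOn g (Ioi 0)) (hg₀ : 0 ≤ᵐ[volume.restrict (Ioi 0)] g)
    {L : ℝ → ℝ → ℝ}
    (hL : ∀ μ σ2 : ℝ, 0 < σ2 → L μ σ2 =
      (∫ ybar, f ybar * (√(n / (2 * π * σ2)) * exp (-(n * (ybar - μ) ^ 2) / (2 * σ2)))) *
      (∫ s in Ioi 0, g s * (((n - 1) / (2 * σ2)) ^ ((n - 1) / 2) / Gamma ((n - 1) / 2) *
        s ^ ((n - 1) / 2 - 1) * exp (-((n - 1) * s) / (2 * σ2))))) :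
    ∫⁻ σ2 in Ioi 0, ∫⁻ μ, ENNReal.ofReal (L μ σ2)
      = ENNReal.ofReal ((n - 1) / (n - 3) * ((∫ y, f y) * ∫ s in Ioi 0, g s)) := by
  have hn₀ : 0 < n := by linarith
  set a := (n - 1) / 2 with ha_def
  have ha : 1 < a := by linarith
  have hmass : a / (a - 1) = (n - 1) / (n - 3) := by
    rw [ha_def, div_sub' two_ne_zero, div_div_div_cancel_right₀ two_ne_zero]
    ring_nf
  have hL_pdf (σ2 : ℝ) (hσ2 : 0 < σ2) (μ : ℝ) : L μ σ2 =
      (∫ y, f y * gaussianPDFReal μ (σ2 / n).toNNReal y) *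
        ∫ s in Ioi 0, g s * gammaPDFReal a (a / σ2) s := by
    simp_rw [hL μ σ2 hσ2, sqrt_mul_exp_eq_gaussianPDFReal hn₀ hσ2]
    congr 1
    refine setIntegral_congr_fun measurableSet_Ioi fun s (hs : 0 < s) ↦ ?_
    simp only [gammaPDFReal, if_pos hs.le, ha_def, div_div, div_mul_eq_mul_div, neg_div]
  rw [setLIntegral_congr_fun measurableSet_Ioi
      fun σ2 hσ2 ↦ lintegral_congr fun μ ↦ congrArg _ (hL_pdf σ2 hσ2 μ),
    lintegral_lintegral_ofReal_integral_mul_gaussianPDFReal_mul_gammaPDFReal hf hf₀ hg hg₀ ha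
      (one_pos.trans ha) fun σ2 hσ2 ↦ (toNNReal_pos.mpr (div_pos hσ2 hn₀)).ne', hmass]

theorem stmt_6 (n : ℕ) (hn : 3 < n) (ε₁ ε₂ : ℝ) (hε₁ : 0 < ε₁) (hε₂ : 0 < ε₂)
    (ybarStar s2Star : ℝ) (L : ℝ → ℝ → ℝ)
    (hL : ∀ μ σ2 : ℝ, 0 < σ2 → L μ σ2 =
      (∫ ybar : ℝ, (ε₁ * n / 2) * Real.exp (-(ε₁ * n) * |ybarStar - ybar|) *
          (Real.sqrt ((n : ℝ) / (2 * Real.pi * σ2)) *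
            Real.exp (-((n : ℝ) * (ybar - μ) ^ 2) / (2 * σ2)))) *
      (∫ s in Set.Ioi (0 : ℝ), (ε₂ * n / 2) * Real.exp (-(ε₂ * n) * |s2Star - s|) *
          (((((n : ℝ) - 1) / (2 * σ2)) ^ (((n : ℝ) - 1) / 2) / Real.Gamma (((n : ℝ) - 1) / 2)) *
            s ^ (((n : ℝ) - 1) / 2 - 1) * Real.exp (-(((n : ℝ) - 1) * s) / (2 * σ2))))) :
    (∫⁻ σ2 in Set.Ioi (0 : ℝ), ∫⁻ μ : ℝ, ENNReal.ofReal (L μ σ2))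
      = ENNReal.ofReal ((((n : ℝ) - 1) / ((n : ℝ) - 3)) *
          (1 / 2 + 1 / 2 * Real.sign s2Star * (1 - Real.exp (-(ε₂ * n) * |s2Star|)))) := by
  have hc₁ : 0 < ε₁ * n := by positivity
  have hc₂ : 0 < ε₂ * n := by positivity
  rw [stmt_6_general (f := laplacePDFReal ybarStar (ε₁ * n)) (g := laplacePDFReal s2Star (ε₂ * n))
    (by exact_mod_cast hn) (integrable_laplacePDFReal _ hc₁)
    (ae_of_all _ (laplacePDFReal_nonneg _ hc₁.le)) (integrable_laplacePDFReal _ hc₂).integrableOn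
    (ae_of_all _ (laplacePDFReal_nonneg _ hc₂.le)) hL,
    integral_laplacePDFReal_eq_one _ hc₁, integral_Ioi_laplacePDFReal _ hc₂, one_mul, sub_zero]
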